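/- Let X = (V, ω) be a shortest-distance digraph. For every subset σ = {x_0, …, x_n} ⊆ V of n+1 distinct vertices with n ≥ 1, the walk-length filtration value satisfies f_X(σ) = min_{ρ ∈ S_{n+1}} Σ_{i=0}^{n−1} ω(x_{ρ(i)}, x_{ρ(i+1)}), where S_{n+1} is the set of all permutations of {0, 1, …, n}. In other words, a minimal-weight walk containing σ can be taken to visit exactly the vertices of σ, each once, in some order. -/

import Mathlib

/-!
Orderings of the vertices `x 0, …, x n` are themselves walks covering them, so every sum over a
permutation is the weight of an admissible walk. Conversely, by the triangle inequality and
nonnegativity, deleting vertices from a walk never increases its weight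
(`walkWeight_le_of_sublist`). From a walk covering the range of `x`, delete every vertex outside
the range and all but one occurrence of every other vertex: what remains is an ordering of the
`x i` (`exists_perm_sublist`), of no larger weight. Hence the two infima bound each other.
-/

variable {X : Type*}

/-- The weight of a walk in a network (complete weighted digraph), given as a list of
vertices: the sum of the weights of consecutive pairs. -/
def walkWeight (ω : X → X → ℝ) (l : List X) : ℝ :=
  ((l.zip l.tail).map fun p => ω p.1 p.2).sum

/-- The walk-length filtration value of a set of vertices of a network: the infimum of the
weights of walks containing all vertices of `σ`. -/
noncomputable def wlf (ω : X → X → ℝ) (σ : Set X) : ℝ :=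
  sInf {c | ∃ l : List X, l ≠ [] ∧ (∀ v ∈ σ, v ∈ l) ∧ walkWeight ω l = c}

theorem walkWeight_cons_cons (ω : X → X → ℝ) (a b : X) (l : List X) :
    walkWeight ω (a :: b :: l) = ω a b + walkWeight ω (b :: l) := by
  simp [walkWeight]

theorem walkWeight_nonneg (ω : X → X → ℝ) (hnn : ∀ a b, 0 ≤ ω a b) (l : List X) :
    0 ≤ walkWeight ω l := by
  refine List.sum_nonneg fun c hc => ?_
  obtain ⟨p, -, rfl⟩ := List.mem_map.1 hc
  exact hnn _ _

/-- Inserting a vertex `b` in second position does not decrease the weight: this is the triangle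
inequality, or nonnegativity when `a` is the only vertex. -/
theorem walkWeight_cons_le_insert (ω : X → X → ℝ) (hnn : ∀ a b, 0 ≤ ω a b)
    (htri : ∀ a b c, ω a c ≤ ω a b + ω b c) (a b : X) (l : List X) :
    walkWeight ω (a :: l) ≤ ω a b + walkWeight ω (b :: l) := by
  cases l with
  | nil => simpa [walkWeight] using hnn a b
  | cons c l =>
    rw [walkWeight_cons_cons, walkWeight_cons_cons]
    linarith [htri a b c]

/-- Monotonicity under sublists for walks with a common first vertex; keeping the first vertex
fixed is what makes the induction go through. -/
theorem walkWeight_cons_le_of_sublist (ω : X → X → ℝ) (hnn : ∀ a b, 0 ≤ ω a b)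
    (htri : ∀ a b c, ω a c ≤ ω a b + ω b c) {l' l : List X} (h : l'.Sublist l) :
    ∀ a, walkWeight ω (a :: l') ≤ walkWeight ω (a :: l) := by
  induction h with
  | slnil => intro a; exact le_rfl
  | cons b _ ih =>
    intro a
    rw [walkWeight_cons_cons]
    exact (walkWeight_cons_le_insert ω hnn htri a b _).trans (by gcongr; exact ih b)
  | cons_cons b _ ih =>
    intro a
    rw [walkWeight_cons_cons, walkWeight_cons_cons]
    linarith [ih b]

/-- Deleting vertices from a walk does not increase its weight. -/
theorem walkWeight_le_of_sublist (ω : X → X → ℝ) (hnn : ∀ a b, 0 ≤ ω a b)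
    (htri : ∀ a b c, ω a c ≤ ω a b + ω b c) {l' l : List X} (h : l'.Sublist l) :
    walkWeight ω l' ≤ walkWeight ω l := by
  induction h with
  | slnil => exact le_rfl
  | @cons l₁ l₂ b _ ih =>
    refine ih.trans ?_
    cases l₂ with
    | nil => simp [walkWeight]
    | cons c l₂ =>
      rw [walkWeight_cons_cons]
      linarith [hnn b c]
  | cons_cons b h _ => exact walkWeight_cons_le_of_sublist ω hnn htri h b

theorem walkWeight_ofFn (ω : X → X → ℝ) :
    ∀ (n : ℕ) (f : Fin (n + 1) → X),
      walkWeight ω (List.ofFn f) = ∑ i : Fin n, ω (f i.castSucc) (f i.succ)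
  | 0, f => by simp [walkWeight]
  | n + 1, f => by
    have h := walkWeight_ofFn ω n fun i => f i.succ
    rw [List.ofFn_succ] at h
    rw [List.ofFn_succ, List.ofFn_succ, walkWeight_cons_cons, h, Fin.sum_univ_succ]
    simp

/-- A list containing all values of an injective family has an ordering of these values as a
sublist. -/
theorem exists_perm_sublist {m : ℕ} (x : Fin m → X) (hx : Function.Injective x)
    (l : List X) (hl : ∀ i, x i ∈ l) :
    ∃ ρ : Equiv.Perm (Fin m), (List.ofFn fun i => x (ρ i)).Sublist l := by
  classical
  obtain ⟨l', hl', hsub, hmem⟩ : ∃ l' : List X, l'.Nodup ∧ l'.Sublist l ∧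
      ∀ v, v ∈ l' ↔ v ∈ Set.range x := by
    refine ⟨(l.filter (· ∈ Set.range x)).dedup, List.nodup_dedup _,
      (List.dedup_sublist _).trans List.filter_sublist, fun v => ?_⟩
    rw [List.mem_dedup, List.mem_filter, decide_eq_true_eq]
    refine ⟨And.right, fun h => ⟨?_, h⟩⟩
    obtain ⟨i, rfl⟩ := h
    exact hl i
  have hlen : l'.length = m := by
    have hp : l'.Perm (List.ofFn x) :=
      (List.perm_ext_iff_of_nodup hl' (List.nodup_ofFn.2 hx)).2 fun v => by
        rw [hmem, List.mem_ofFn, Set.mem_range]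
    simpa using hp.length_eq
  subst hlen
  choose f hf using fun i : Fin l'.length => (hmem (l'.get i)).1 (List.get_mem l' i)
  have hinj : Function.Injective f := fun i j hij =>
    hl'.injective_get (by rw [← hf i, ← hf j, hij])
  refine ⟨Equiv.ofBijective f (Finite.injective_iff_bijective.1 hinj), ?_⟩
  simpa [hf] using hsub

/-- In a shortest-distance digraph (a network whose weight function satisfies the triangle
inequality), the walk-length filtration value of a set `σ` of `n + 1` distinct vertices
(`n ≥ 1`) equals the minimum over all permutations `ρ` of `{0, …, n}` of
`Σ_{i=0}^{n-1} ω(x_{ρ(i)}, x_{ρ(i+1)})`: a minimal walk containing `σ` can be taken to be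
an ordering of the vertices of `σ` with no additional vertices. -/
theorem stmt2 [Fintype X] (ω : X → X → ℝ)
    (hnn : ∀ a b, 0 ≤ ω a b)
    (hzero : ∀ a b, ω a b = 0 ↔ a = b)
    (htri : ∀ a b c, ω a c ≤ ω a b + ω b c)
    (n : ℕ) (hn : 1 ≤ n) (x : Fin (n + 1) → X) (hx : Function.Injective x) :
    wlf ω (Set.range x)
      = sInf {c | ∃ ρ : Equiv.Perm (Fin (n + 1)),
          c = ∑ i : Fin n, ω (x (ρ i.castSucc)) (x (ρ i.succ))} := by
  have hsum (ρ : Equiv.Perm (Fin (n + 1))) :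
      walkWeight ω (List.ofFn fun i => x (ρ i))
        = ∑ i : Fin n, ω (x (ρ i.castSucc)) (x (ρ i.succ)) :=
    walkWeight_ofFn ω n _
  have hwalk (ρ : Equiv.Perm (Fin (n + 1))) :
      (List.ofFn fun i => x (ρ i)) ≠ [] ∧
        ∀ v ∈ Set.range x, v ∈ List.ofFn fun i => x (ρ i) := by
    refine ⟨by simp, ?_⟩
    rintro _ ⟨i, rfl⟩
    exact List.mem_ofFn.2 ⟨ρ.symm i, by simp⟩
  unfold wlf
  apply le_antisymm
  · refine le_csInf ⟨_, 1, rfl⟩ ?_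
    rintro _ ⟨ρ, rfl⟩
    refine csInf_le ⟨0, ?_⟩ ⟨_, (hwalk ρ).1, (hwalk ρ).2, hsum ρ⟩
    rintro _ ⟨l, -, -, rfl⟩
    exact walkWeight_nonneg ω hnn l
  · refine le_csInf ⟨_, _, (hwalk 1).1, (hwalk 1).2, rfl⟩ ?_
    rintro _ ⟨l, -, hl, rfl⟩
    obtain ⟨ρ, hρ⟩ := exists_perm_sublist x hx l fun i => hl _ ⟨i, rfl⟩
    refine le_trans (csInf_le ⟨0, ?_⟩ ⟨ρ, rfl⟩)
      ((hsum ρ).ge.trans (walkWeight_le_of_sublist ω hnn htri hρ))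
    rintro _ ⟨τ, rfl⟩
    exact Finset.sum_nonneg fun i _ => hnn _ _
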